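/- arXiv:2212.09957 — 2 statements merged into one kernel-verified Lean document; each statement's English description precedes it below -/
import Mathlib

section
/- (Proposition 1(ii).) The interpolant p^h(T,k) is a nondecreasing function of T on [0,1] for every fixed k ∈ [0,1] if and only if ρ_{i+1,j} ≥ ρ_{i,j} for all indices 0 ≤ i ≤ N−1 and 0 ≤ j ≤ N. -/
/-- The 1D hat function with mesh `h` centered at `c`. -/
noncomputable def hat (h c t : ℝ) : ℝ := max (1 - |t - c| / h) 0

/-- The finite-dimensional hat-function interpolant `p^h` with mesh `h = 1/N`
and coefficients `ρ`. -/
noncomputable def interp (N : ℕ) (ρ : ℕ → ℕ → ℝ) (T k : ℝ) : ℝ :=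
  ∑ i ∈ Finset.range (N + 1), ∑ j ∈ Finset.range (N + 1),
    ρ i j * (hat (1 / N) ((i : ℝ) * (1 / N)) T * hat (1 / N) ((j : ℝ) * (1 / N)) k)

/-- Clamp to `[0,1]`. -/
noncomputable def clampC (y : ℝ) : ℝ := max 0 (min 1 y)

lemma clampC_mono : Monotone clampC := fun _ _ h =>
  max_le_max le_rfl (min_le_min le_rfl h)

lemma hat_eq_clampC (N : ℕ) (hN : 1 ≤ N) (i : ℕ) (T : ℝ) :
    hat (1 / N) ((i : ℝ) * (1 / N)) T = clampC (N * T - i + 1) - clampC (N * T - i) := by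
  have hp : (0 : ℝ) < N := by exact_mod_cast hN
  have h1 : |T - (i : ℝ) * (1 / N)| / (1 / N) = |N * T - i| := by
    have : (N : ℝ) * T - i = N * (T - (i : ℝ) * (1 / N)) := by field_simp
    rw [this, abs_mul, abs_of_pos hp]
    field_simp
  unfold hat clampC
  rw [h1]
  generalize (N : ℝ) * T - i = y
  rcases abs_cases y with ⟨h, h0⟩ | ⟨h, h0⟩ <;> rw [h] <;>
  rcases max_cases (1 - |y|) 0 with ⟨h2, h3⟩ | ⟨h2, h3⟩ <;> rw [h] at h2 h3 <;> rw [h2] <;>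
  rcases min_cases 1 (y + 1) with ⟨h4, h5⟩ | ⟨h4, h5⟩ <;> rw [h4] <;>
  rcases min_cases 1 y with ⟨h6, h7⟩ | ⟨h6, h7⟩ <;> rw [h6] <;>
  simp only [max_def] <;> split_ifs <;> linarith

lemma abel_sum (a : ℕ → ℝ) (x : ℝ) (n : ℕ) :
    ∑ i ∈ Finset.range (n + 1), a i * (clampC (x - i + 1) - clampC (x - i)) =
      a 0 * clampC (x + 1) + ∑ i ∈ Finset.range n, (a (i + 1) - a i) * clampC (x - i)
        - a n * clampC (x - n) := by
  induction n with
  | zero => simp; ring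
  | succ n ih =>
    rw [Finset.sum_range_succ, ih, Finset.sum_range_succ _ n]
    have : x - ((n + 1 : ℕ) : ℝ) + 1 = x - n := by push_cast; ring
    rw [this]
    ring

lemma hat_node (N : ℕ) (hN : 1 ≤ N) (i m : ℕ) :
    hat (1 / N) ((i : ℝ) * (1 / N)) ((m : ℝ) * (1 / N)) = if i = m then 1 else 0 := by
  have hp : (0 : ℝ) < N := by exact_mod_cast hN
  split_ifs with h
  · subst h; simp [hat]
  · have h1 : |(m : ℝ) * (1 / N) - (i : ℝ) * (1 / N)| / (1 / N) = |(m : ℝ) - i| := by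
      rw [← sub_mul, abs_mul, abs_of_pos (by positivity : (0 : ℝ) < 1 / N)]
      field_simp
    unfold hat
    rw [h1]
    apply max_eq_right
    have : (1 : ℤ) ≤ |(m : ℤ) - i| := Int.one_le_abs (by omega)
    have : (1 : ℝ) ≤ |(m : ℝ) - i| := by exact_mod_cast this
    linarith

lemma interp_node (N : ℕ) (hN : 1 ≤ N) (ρ : ℕ → ℕ → ℝ) (i j : ℕ) (hi : i ≤ N) (hj : j ≤ N) :
    interp N ρ ((i : ℝ) * (1 / N)) ((j : ℝ) * (1 / N)) = ρ i j := by
  unfold interp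
  simp only [hat_node N hN]
  rw [Finset.sum_eq_single i, Finset.sum_eq_single j]
  · simp
  · intro b _ hb; simp [hb]
  · intro h; simp at h; omega
  · intro b _ hb; simp [hb]
  · intro h; simp at h; omega

lemma interp_eq (N : ℕ) (hN : 1 ≤ N) (ρ : ℕ → ℕ → ℝ) (k T : ℝ) (hT : T ∈ Set.Icc (0 : ℝ) 1)
    (a : ℕ → ℝ)
    (ha : ∀ i, a i = ∑ j ∈ Finset.range (N + 1), ρ i j * hat (1 / N) ((j : ℝ) * (1 / N)) k) :
    interp N ρ T k = a 0 +
      ∑ i ∈ Finset.range N, (a (i + 1) - a i) * clampC (N * T - i) := by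
  have hp : (0 : ℝ) < N := by exact_mod_cast hN
  have h1 : clampC (N * T + 1) = 1 := by
    have : 0 ≤ N * T := mul_nonneg hp.le hT.1
    unfold clampC
    rw [min_eq_left (by linarith), max_eq_right zero_le_one]
  have h2 : clampC (N * T - N) = 0 := by
    have : N * T ≤ N := mul_le_of_le_one_right hp.le hT.2
    unfold clampC
    rw [min_eq_right (by linarith), max_eq_left (by linarith)]
  have h := abel_sum a (N * T) N
  rw [h1, h2, mul_one, mul_zero, sub_zero] at h
  rw [← h]
  unfold interp
  refine Finset.sum_congr rfl fun i _ => ?_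
  rw [← hat_eq_clampC N hN, ha, Finset.sum_mul]
  exact Finset.sum_congr rfl fun j _ => by ring

/-- Proposition 1(ii): `p^h(T,k)` is nondecreasing in `T` on `[0,1]` for
every fixed `k ∈ [0,1]` iff `ρ_{i+1,j} ≥ ρ_{i,j}` for all `0 ≤ i ≤ N−1`, `0 ≤ j ≤ N`. -/
theorem interp_monotone_iff (N : ℕ) (hN : 1 ≤ N) (ρ : ℕ → ℕ → ℝ) :
    (∀ k ∈ Set.Icc (0 : ℝ) 1, MonotoneOn (fun T => interp N ρ T k) (Set.Icc (0 : ℝ) 1)) ↔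
      (∀ i j : ℕ, i + 1 ≤ N → j ≤ N → ρ i j ≤ ρ (i + 1) j) := by
  have hp : (0 : ℝ) < N := by exact_mod_cast hN
  have hmem : ∀ i : ℕ, i ≤ N → (i : ℝ) * (1 / N) ∈ Set.Icc (0 : ℝ) 1 := by
    intro i hi
    have : (i : ℝ) ≤ N := by exact_mod_cast hi
    refine ⟨by positivity, ?_⟩
    rw [mul_one_div]
    exact (div_le_one hp).2 this
  constructor
  · intro H i j hi hj
    have h := H _ (hmem j hj) (hmem i (by omega)) (hmem (i + 1) hi)
      (mul_le_mul_of_nonneg_right (by exact_mod_cast Nat.le_succ i) (by positivity))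
    simp only at h
    rwa [interp_node N hN ρ i j (by omega) hj, interp_node N hN ρ (i + 1) j hi hj] at h
  · intro H k _ S hS T hT hST
    simp only
    rw [interp_eq N hN ρ k S hS _ fun i => rfl, interp_eq N hN ρ k T hT _ fun i => rfl]
    gcongr with i hi
    · rw [sub_nonneg]
      refine Finset.sum_le_sum fun j hj => ?_
      rw [Finset.mem_range] at hi hj
      exact mul_le_mul_of_nonneg_right (H i j (by omega) (by omega)) (le_max_right _ _)
    · exact clampC_mono (by gcongr)
end

section
/- (Dupire formula in implied total variance form, Eq. (3.2).) Let S₀ > 0 and let Θ : (0,∞) × ℝ → (0,∞) be of class C^{1,2} (C¹ in the maturity variable T and C² in the log-moneyness variable κ). Define the reduced Black–Scholes put price p(T,k) = k·N(−d₋) − S₀·N(−d₊) for k > 0, where κ = log(k/S₀), θ = Θ(T,κ), d₊ = −κ/√θ + √θ/2, d₋ = d₊ − √θ, and N is the standard normal cumulative distribution function N(x) = ∫_{−∞}^{x} (2π)^{−1/2} e^{−t²/2} dt. Then for all T > 0 and k > 0 such that the denominator below is nonzero, ∂_T p(T,k) / (k² ∂²_k p(T,k)) = (1/2) · ∂_T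 Θ(T,κ) / [ 1 − (κ/Θ)·∂_κ Θ + (1/4)(−1/4 − 1/Θ + κ²/Θ²)(∂_κ Θ)² + (1/2)·∂²_κ Θ ], where Θ and its partial derivatives are evaluated at (T,κ). -/
open Real

lemma ncdf_hasDerivAt (Ncdf : ℝ → ℝ)
    (hN : ∀ x : ℝ, Ncdf x = ∫ t in Set.Iic x, (Real.sqrt (2 * π))⁻¹ * exp (-t ^ 2 / 2))
    (x : ℝ) : HasDerivAt Ncdf ((Real.sqrt (2 * π))⁻¹ * exp (-x ^ 2 / 2)) x := by
  have hint : MeasureTheory.Integrable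
      (fun t : ℝ => (Real.sqrt (2 * π))⁻¹ * exp (-t ^ 2 / 2)) := by
    have h := (integrable_exp_neg_mul_sq (b := 1 / 2) (by norm_num)).const_mul
      (Real.sqrt (2 * π))⁻¹
    refine h.congr (Filter.Eventually.of_forall fun t => ?_)
    simp only
    congr 2
    ring
  have hcont : Continuous (fun t : ℝ => (Real.sqrt (2 * π))⁻¹ * exp (-t ^ 2 / 2)) := by
    fun_prop
  have h1 : Ncdf = fun y => Ncdf 0 +
      ∫ t in (0 : ℝ)..y, (Real.sqrt (2 * π))⁻¹ * exp (-t ^ 2 / 2) := by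
    funext y
    rw [hN y, hN 0, ← intervalIntegral.integral_Iic_sub_Iic hint.integrableOn hint.integrableOn]
    ring
  rw [h1]
  exact (hcont.integral_hasStrictDerivAt 0 x).hasDerivAt.const_add _

/-- Derivative of `-d₋`. -/
lemma dminus_hasDerivAt (L w : ℝ → ℝ) (L' w' x : ℝ) (hL : HasDerivAt L L' x)
    (hw : HasDerivAt w w' x) (hpos : 0 < w x) :
    HasDerivAt (fun y => -(-L y / √(w y) + √(w y) / 2 - √(w y)))
      (L' / √(w x) - L x * w' / (2 * √(w x) ^ 3) + w' / (4 * √(w x))) x := by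
  have hs := hw.sqrt hpos.ne'
  have hsp : 0 < √(w x) := Real.sqrt_pos.2 hpos
  refine ((((hL.neg.div hs hsp.ne').add (hs.div_const 2)).sub hs).neg).congr_deriv ?_
  simp only [Pi.neg_apply]
  field_simp
  ring

/-- Derivative of `-d₊`. -/
lemma dplus_hasDerivAt (L w : ℝ → ℝ) (L' w' x : ℝ) (hL : HasDerivAt L L' x)
    (hw : HasDerivAt w w' x) (hpos : 0 < w x) :
    HasDerivAt (fun y => -(-L y / √(w y) + √(w y) / 2))
      (L' / √(w x) - L x * w' / (2 * √(w x) ^ 3) - w' / (4 * √(w x))) x := by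
  have hs := hw.sqrt hpos.ne'
  have hsp : 0 < √(w x) := Real.sqrt_pos.2 hpos
  refine (((hL.neg.div hs hsp.ne').add (hs.div_const 2)).neg).congr_deriv ?_
  simp only [Pi.neg_apply]
  field_simp
  ring

lemma density_identity (S₀ K s : ℝ) (hS₀ : 0 < S₀) (hK : 0 < K) (hs : 0 < s) :
    S₀ * exp (-(-(-Real.log (K / S₀) / s + s / 2)) ^ 2 / 2) =
      K * exp (-(-(-Real.log (K / S₀) / s + s / 2 - s)) ^ 2 / 2) := by
  have h : -(-(-Real.log (K / S₀) / s + s / 2)) ^ 2 / 2 =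
      Real.log (K / S₀) + -(-(-Real.log (K / S₀) / s + s / 2 - s)) ^ 2 / 2 := by
    field_simp
    ring
  rw [h, exp_add, exp_log (div_pos hK hS₀)]
  field_simp

lemma put_hasDerivAt (S₀ : ℝ) (hS₀ : 0 < S₀) (Ncdf : ℝ → ℝ)
    (hN : ∀ x : ℝ, Ncdf x = ∫ t in Set.Iic x, (Real.sqrt (2 * π))⁻¹ * exp (-t ^ 2 / 2))
    (K L w : ℝ → ℝ) (K' L' w' x : ℝ) (hK : HasDerivAt K K' x) (hL : HasDerivAt L L' x)
    (hw : HasDerivAt w w' x) (hpos : 0 < w x) (hKpos : 0 < K x)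
    (hLx : L x = Real.log (K x / S₀)) :
    HasDerivAt (fun y => K y * Ncdf (-(-L y / √(w y) + √(w y) / 2 - √(w y))) -
        S₀ * Ncdf (-(-L y / √(w y) + √(w y) / 2)))
      (K' * Ncdf (-(-L x / √(w x) + √(w x) / 2 - √(w x))) +
        K x * ((√(2 * π))⁻¹ * exp (-(-(-L x / √(w x) + √(w x) / 2 - √(w x))) ^ 2 / 2)) *
          (w' / (2 * √(w x)))) x := by
  have hsp : 0 < √(w x) := Real.sqrt_pos.2 hpos
  have ha := (ncdf_hasDerivAt Ncdf hN _).comp x (dminus_hasDerivAt L w L' w' x hL hw hpos)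
  have hb := (ncdf_hasDerivAt Ncdf hN _).comp x (dplus_hasDerivAt L w L' w' x hL hw hpos)
  refine ((hK.mul ha).sub (hb.const_mul S₀)).congr_deriv ?_
  have hid := density_identity S₀ (K x) (√(w x)) hS₀ hKpos hsp
  rw [← hLx] at hid
  simp only [Function.comp_apply]
  generalize exp (-(-(-L x / √(w x) + √(w x) / 2)) ^ 2 / 2) = B at *
  generalize exp (-(-(-L x / √(w x) + √(w x) / 2 - √(w x))) ^ 2 / 2) = A at *
  generalize (√(2 * π))⁻¹ = c at *
  have : ∀ Q : ℝ, S₀ * (c * B * Q) = K x * A * c * Q := by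
    intro Q
    rw [← hid]
    ring
  rw [this]
  field_simp
  ring

/-- Dupire formula in implied total variance form: for the reduced
Black–Scholes put price `p(T,k) = k N(−d₋) − S₀ N(−d₊)` written in terms of the implied
total variance `Θ(T,κ)`, `κ = log(k/S₀)`, the reduced Dupire ratio equals
`½ ∂_T Θ / [1 − (κ/Θ)∂_κΘ + ¼(−¼ − 1/Θ + κ²/Θ²)(∂_κΘ)² + ½ ∂²_κΘ]`. -/
theorem dupire_implied_total_variance (S₀ : ℝ) (hS₀ : 0 < S₀)
    (Θ ΘT Θκ Θκκ : ℝ → ℝ → ℝ)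
    (hΘpos : ∀ T x : ℝ, 0 < T → 0 < Θ T x)
    (hΘT : ∀ T x : ℝ, 0 < T → HasDerivAt (fun t => Θ t x) (ΘT T x) T)
    (hΘκ : ∀ T x : ℝ, 0 < T → HasDerivAt (fun y => Θ T y) (Θκ T x) x)
    (hΘκκ : ∀ T x : ℝ, 0 < T → HasDerivAt (fun y => Θκ T y) (Θκκ T x) x)
    (Ncdf : ℝ → ℝ)
    (hN : ∀ x : ℝ, Ncdf x = ∫ t in Set.Iic x, (Real.sqrt (2 * π))⁻¹ * exp (-t ^ 2 / 2))
    (p : ℝ → ℝ → ℝ)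
    (hp : ∀ T k : ℝ, p T k =
      k * Ncdf (-(-Real.log (k / S₀) / Real.sqrt (Θ T (Real.log (k / S₀))) +
            Real.sqrt (Θ T (Real.log (k / S₀))) / 2 -
            Real.sqrt (Θ T (Real.log (k / S₀))))) -
        S₀ * Ncdf (-(-Real.log (k / S₀) / Real.sqrt (Θ T (Real.log (k / S₀))) +
            Real.sqrt (Θ T (Real.log (k / S₀))) / 2)))
    (T k : ℝ) (hT : 0 < T) (hk : 0 < k)
    (κ θ : ℝ) (hκ : κ = Real.log (k / S₀)) (hθ : θ = Θ T κ)
    (hden : 1 - κ / θ * Θκ T κ +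
        (1 / 4) * (-(1 / 4) - 1 / θ + κ ^ 2 / θ ^ 2) * (Θκ T κ) ^ 2 +
        (1 / 2) * Θκκ T κ ≠ 0) :
    deriv (fun t => p t k) T / (k ^ 2 * deriv (fun x => deriv (fun x' => p T x') x) k) =
      (1 / 2) * ΘT T κ /
        (1 - κ / θ * Θκ T κ +
          (1 / 4) * (-(1 / 4) - 1 / θ + κ ^ 2 / θ ^ 2) * (Θκ T κ) ^ 2 +
          (1 / 2) * Θκκ T κ) := by
  subst hθ
  have hlog : ∀ x : ℝ, 0 < x → HasDerivAt (fun y => Real.log (y / S₀)) (1 / x) x := by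
    intro x hx
    refine (((hasDerivAt_id x).div_const S₀).log (div_pos hx hS₀).ne').congr_deriv ?_
    simp only [id]
    field_simp
  have hw : ∀ x : ℝ, 0 < x → HasDerivAt (fun y => Θ T (Real.log (y / S₀)))
      (Θκ T (Real.log (x / S₀)) * (1 / x)) x := fun x hx =>
    (hΘκ T _ hT).comp x (hlog x hx)
  -- maturity derivative
  have hDT := (put_hasDerivAt S₀ hS₀ Ncdf hN (fun _ => k) (fun _ => Real.log (k / S₀))
    (fun t => Θ t (Real.log (k / S₀))) 0 0 _ T (hasDerivAt_const T k) (hasDerivAt_const T _)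
    (hΘT T _ hT) (hΘpos T _ hT) hk rfl)
  have hpT : (fun t => p t k) = _ := funext fun t => hp t k
  have e1 := hDT.deriv
  rw [← hpT] at e1
  -- strike derivative
  have hpk : (fun x => p T x) = _ := funext fun x => hp T x
  have e2 : ∀ x : ℝ, 0 < x → deriv (fun x' => p T x') x =
      Ncdf (-(-Real.log (x / S₀) / √(Θ T (Real.log (x / S₀))) +
        √(Θ T (Real.log (x / S₀))) / 2 - √(Θ T (Real.log (x / S₀))))) +
      ((√(2 * π))⁻¹ * exp (-(-(-Real.log (x / S₀) / √(Θ T (Real.log (x / S₀))) +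
        √(Θ T (Real.log (x / S₀))) / 2 - √(Θ T (Real.log (x / S₀))))) ^ 2 / 2)) *
        (Θκ T (Real.log (x / S₀)) / (2 * √(Θ T (Real.log (x / S₀))))) := by
    intro x hx
    have h := (put_hasDerivAt S₀ hS₀ Ncdf hN (fun y => y) (fun y => Real.log (y / S₀))
      (fun y => Θ T (Real.log (y / S₀))) 1 _ _ x (hasDerivAt_id x) (hlog x hx)
      (hw x hx) (hΘpos T _ hT) hx rfl).deriv
    rw [← hpk] at h
    rw [h]
    have := hx.ne'
    have hs : √(Θ T (Real.log (x / S₀))) ≠ 0 := (Real.sqrt_pos.2 (hΘpos T _ hT)).ne'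
    rw [one_mul]
    congr 1
    field_simp
  have ha := dminus_hasDerivAt (fun y => Real.log (y / S₀))
    (fun y => Θ T (Real.log (y / S₀))) _ _ k (hlog k hk) (hw k hk) (hΘpos T _ hT)
  have hsd := (hw k hk).sqrt (hΘpos T _ hT).ne'
  have hNa := (ncdf_hasDerivAt Ncdf hN _).comp k ha
  have hEd := (((ha.pow 2).neg.div_const 2).exp).const_mul (√(2 * π))⁻¹
  have hQ := ((hΘκκ T _ hT).comp k (hlog k hk)).div (hsd.const_mul 2)
    (mul_pos two_pos (Real.sqrt_pos.2 (hΘpos T _ hT))).ne'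
  have hev : (fun x => deriv (fun x' => p T x') x) =ᶠ[nhds k] _ :=
    Filter.eventually_of_mem (lt_mem_nhds hk) e2
  have e3 := ((hNa.add (hEd.mul hQ)).congr_of_eventuallyEq hev).deriv
  rw [e1, e3]
  clear e1 e2 e3 hev hQ hEd hNa hsd ha hpT hpk hDT hw hlog
  simp only [Function.comp_apply, Pi.neg_apply, Pi.pow_apply, Pi.div_apply, show (2 : ℕ) - 1 = 1 from rfl,
    pow_one, Nat.cast_ofNat, ← hκ]
  have hθp := hΘpos T κ hT
  obtain ⟨s, hs0, hsq⟩ : ∃ s : ℝ, 0 < s ∧ Θ T κ = s ^ 2 :=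
    ⟨√(Θ T κ), Real.sqrt_pos.2 hθp, (Real.sq_sqrt hθp.le).symm⟩
  rw [hsq] at hden ⊢
  rw [Real.sqrt_sq hs0.le]
  have hE : exp (-(-(-κ / s + s / 2 - s)) ^ 2 / 2) ≠ 0 := (exp_pos _).ne'
  have hc : (√(2 * π))⁻¹ ≠ 0 := by positivity
  generalize exp (-(-(-κ / s + s / 2 - s)) ^ 2 / 2) = E at *
  generalize (√(2 * π))⁻¹ = c at *
  generalize Θκ T κ = u at *
  generalize Θκκ T κ = v at *
  generalize ΘT T κ = r at *
  have hs := hs0.ne'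
  have hk' := hk.ne'
  set D := 1 - κ / s ^ 2 * u + (1 / 4) * (-(1 / 4) - 1 / s ^ 2 + κ ^ 2 / (s ^ 2) ^ 2) * u ^ 2 +
    (1 / 2) * v with hD
  trans (k * (c * E) * (r / (2 * s))) / (k * (c * E) / s * D)
  · congr 1
    · ring
    · rw [hD]
      field_simp
      ring
  · field_simp
end
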